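/- Let (A, φ) be a noncommutative probability space with monotone cumulants {h_n} and free cumulants {r_n}. Then for every n ≥ 1 and all a_1,…,a_n ∈ A, h_n(a_1,…,a_n) = Σ_{π ∈ NC_irr(n)} (−1)^{|π|−1} ω(t(π)) · r_π(a_1,…,a_n). -/

import Mathlib

open scoped BigOperators

/-- Planar rooted trees (rose trees). -/
inductive PTree : Type
  | node : List PTree → PTree

namespace PTree

/-- The single-vertex tree (a leaf). -/
abbrev leaf : PTree := .node []

/-- Subtree at a given path from the root (entries select children). -/
def subtreeAt : List ℕ → PTree → Option PTree
  | [], t => some t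
  | i :: p, node cs => (cs[i]?).bind (subtreeAt p)

/-- `p` is (the path of) a vertex of `t`. -/
def IsVertex (t : PTree) (p : List ℕ) : Prop := (subtreeAt p t).isSome

/-- `p` is a leaf of `t`. -/
def IsLeafAt (t : PTree) (p : List ℕ) : Prop := subtreeAt p t = some leaf

/-- `p` is an internal (non-leaf) vertex of `t`. -/
def IsInternalAt (t : PTree) (p : List ℕ) : Prop :=
  ∃ cs, subtreeAt p t = some (node cs) ∧ cs ≠ []

/-- Schröder trees: every internal vertex has at least two children. -/
inductive IsSchroder : PTree → Prop
  | leaf : IsSchroder (node [])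
  | node (cs : List PTree) : 2 ≤ cs.length → (∀ c ∈ cs, IsSchroder c) → IsSchroder (node cs)

/-- Number of leaves of a tree. -/
noncomputable def numLeaves (t : PTree) : ℕ := Nat.card {p : List ℕ // IsLeafAt t p}

/-- Number of sectors between consecutive leaves. -/
noncomputable def numSectors (t : PTree) : ℕ := numLeaves t - 1

/-- Number of internal vertices. -/
noncomputable def numInternal (t : PTree) : ℕ := Nat.card {p : List ℕ // IsInternalAt t p}

/-- The set of Schröder trees with `n+1` leaves. -/
def ST (n : ℕ) : Set PTree := {t | IsSchroder t ∧ numLeaves t = n + 1}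

/-- Number of surjective strictly order-preserving maps from the poset of internal
vertices of `t` (i.e. the vertex poset of the skeleton `sk(t)`, with the root minimal,
the order being the ancestor/prefix order) onto `{1, …, k}`. This is `ω_k(sk(t))`. -/
noncomputable def omegaSkK (t : PTree) (k : ℕ) : ℕ :=
  Nat.card {f : {p : List ℕ // IsInternalAt t p} → Fin k //
    Function.Surjective f ∧ ∀ v w, v.1 <+: w.1 → v ≠ w → f v < f w}

/-- The Murua coefficient `ω(sk(t))` of the skeleton of `t`. -/
noncomputable def omegaSk (t : PTree) : ℂ :=
  ∑ k ∈ Finset.Icc 1 (numInternal t), ((-1 : ℂ) ^ (k + 1) / (k : ℂ)) * (omegaSkK t k : ℂ)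

/-- The subtree of `t` at path `p` (junk value: a leaf). -/
noncomputable def subtree! (t : PTree) (p : List ℕ) : PTree := (subtreeAt p t).getD leaf

/-- Number of leaves of `t` strictly to the left of the subtree at `p`. -/
noncomputable def leavesBefore (t : PTree) (p : List ℕ) : ℕ :=
  Nat.card {q : List ℕ // IsLeafAt t q ∧ List.Lex (· < ·) q p ∧ ¬ p <+: q}

/-- Sector number `i` (0-indexed: the sector between the `(i+1)`-st and `(i+2)`-nd leaves of `t`)
lies strictly inside the subtree of `t` rooted at `p`. -/
def SectorIn (t : PTree) (p : List ℕ) (i : ℕ) : Prop :=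
  leavesBefore t p ≤ i ∧ i + 2 ≤ leavesBefore t p + numLeaves (subtree! t p)

/-- The internal vertex `v` of `t` owns sector `i`: the sector lies in the corolla at `v`,
i.e. inside the subtree at `v` but not inside the subtree at any strictly deeper vertex. -/
def OwnsSector (t : PTree) (v : List ℕ) (i : ℕ) : Prop :=
  IsInternalAt t v ∧ SectorIn t v i ∧
    ∀ w, IsInternalAt t w → v <+: w → w ≠ v → ¬ SectorIn t w i

/-- Sectors `i` and `j` belong to the same block of the noncrossing partition `π(t)`. -/
def SameOwner (t : PTree) (i j : ℕ) : Prop := ∃ v, OwnsSector t v i ∧ OwnsSector t v j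

open Classical in
/-- `φ_{π(t)}(a_1,…,a_n)`: the product over the blocks of the noncrossing partition `π(t)`
(one block per internal vertex `v`, consisting of the sectors owned by `v`) of `φ` applied to
the ordered product of the corresponding letters of `w`. -/
noncomputable def phiPi {A : Type*} [Ring A] (φ : A → ℂ) (t : PTree) (w : List A) : ℂ :=
  ∏ᶠ v ∈ {v : List ℕ | IsInternalAt t v},
    φ ((((List.range w.length).filter fun i => OwnsSector t v i).map fun i => w.getD i 0).prod)

/-- A corolla: a root whose (at least two) children are all leaves. -/
def corolla (m : ℕ) : PTree := node (List.replicate m leaf)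

/-- `t` is a corolla. -/
def IsCorolla (t : PTree) : Prop := ∃ m, 2 ≤ m ∧ t = corolla m

/-- Graft a tree `s` onto the leftmost leaf of `t`. -/
def graftLeftmost : PTree → PTree → PTree
  | node [], s => s
  | node (c :: cs), s => node (graftLeftmost c s :: cs)

/-- Trees obtained from the single-vertex tree by repeatedly grafting a corolla
onto the leftmost leaf. -/
inductive IsBST : PTree → Prop
  | single : IsBST leaf
  | graft (t : PTree) (m : ℕ) : IsBST t → 2 ≤ m → IsBST (graftLeftmost t (corolla m))

/-- Schröder trees whose leftmost child of the root is a leaf. -/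
def IsPST (t : PTree) : Prop := ∃ cs, t = node (leaf :: cs)

end PTree
section Partitions

open scoped BigOperators

/-- Set partitions of `[n] = {1,…,n}`, modeled as finpartitions of `Fin n`. -/
abbrev NPart (n : ℕ) := Finpartition (Finset.univ : Finset (Fin n))

/-- Noncrossing partitions: there are no `a < b < c < d` with `a, c` in one block and
`b, d` in a different block. -/
def IsNoncrossing {n : ℕ} (π : NPart n) : Prop :=
  ∀ a b c d : Fin n, a < b → b < c → c < d →
    ∀ V ∈ π.parts, ∀ W ∈ π.parts, a ∈ V → c ∈ V → b ∈ W → d ∈ W → V = W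

/-- Interval partitions: every block is an interval of consecutive elements. -/
def IsIntervalPart {n : ℕ} (π : NPart n) : Prop :=
  ∀ V ∈ π.parts, ∀ x ∈ V, ∀ y ∈ V, ∀ z : Fin n, x ≤ z → z ≤ y → z ∈ V

/-- Irreducible noncrossing partitions: `1` and `n` lie in the same block. -/
def IsIrreducibleNC {n : ℕ} (π : NPart n) : Prop :=
  ∃ V ∈ π.parts, (∀ i : Fin n, i.val = 0 → i ∈ V) ∧ (∀ i : Fin n, i.val = n - 1 → i ∈ V)

/-- `W` is nested in `V`: every element of `W` lies in the interval `[min V, max V]`. -/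
def NestedIn {n : ℕ} (W V : Finset (Fin n)) : Prop :=
  ∀ w ∈ W, (∃ a ∈ V, a ≤ w) ∧ (∃ b ∈ V, w ≤ b)

open Classical in
/-- The forest factorial `t(π)!` of the forest of nestings of `π`: the product, over all
blocks `V`, of the number of blocks nested in `V` (the size of the subtree rooted at `V`). -/
noncomputable def forestFactorial {n : ℕ} (π : NPart n) : ℕ :=
  ∏ V ∈ π.parts, (π.parts.filter fun W => NestedIn W V).card

/-- `f_π(a_1,…,a_n)`: the product over the blocks `V = {i_1 < … < i_s}` of `π` of
`f(a_{i_1},…,a_{i_s})`, for a family of multilinear functionals encoded as `f : List A → ℂ`. -/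
noncomputable def blockApply {A : Type*} {n : ℕ} (f : List A → ℂ) (a : Fin n → A)
    (π : NPart n) : ℂ :=
  ∏ V ∈ π.parts, f ((V.sort (· ≤ ·)).map a)

/-- `φ_π(a_1,…,a_n)` for the moment functionals `φ_m(a_1,…,a_m) = φ(a_1 ⋯ a_m)`. -/
noncomputable def momApply {A : Type*} [Ring A] {n : ℕ} (φ : A → ℂ) (a : Fin n → A)
    (π : NPart n) : ℂ :=
  blockApply (fun l => φ l.prod) a π

/-- `ω_k(t(π))` for the nesting poset of the blocks of `π` (for irreducible `π`, this is
the vertex poset of the tree of nestings, rooted at the outermost block): the number of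
surjective strictly order-preserving maps onto `{1,…,k}`. -/
noncomputable def omegaNestK {n : ℕ} (π : NPart n) (k : ℕ) : ℕ :=
  Nat.card {f : {V // V ∈ π.parts} → Fin k // Function.Surjective f ∧
    ∀ V W : {V // V ∈ π.parts}, NestedIn W.1 V.1 → V ≠ W → f V < f W}

/-- The Murua coefficient `ω(t(π))` of the tree (forest) of nestings of `π`. -/
noncomputable def omegaNest {n : ℕ} (π : NPart n) : ℂ :=
  ∑ k ∈ Finset.Icc 1 π.parts.card, ((-1 : ℂ) ^ (k + 1) / (k : ℂ)) * (omegaNestK π k : ℂ)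

/-- The noncrossing partition `π(t)` associated to a Schröder tree `t ∈ ST(n)` equals `π`:
two sectors lie in the same block of `π(t)` (i.e. have the same owning internal vertex)
iff they lie in the same block of `π`. -/
def TreePartEq {n : ℕ} (t : PTree) (π : NPart n) : Prop :=
  ∀ i j : Fin n, PTree.SameOwner t i.val j.val ↔ ∃ V ∈ π.parts, i ∈ V ∧ j ∈ V

/-- The moment–cumulant relation defining the monotone cumulants `h`. -/
def MonotoneMC {A : Type*} [Ring A] (φ : A → ℂ) (h : List A → ℂ) : Prop :=
  ∀ (m : ℕ), 1 ≤ m → ∀ a : Fin m → A,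
    φ (List.ofFn a).prod =
      ∑ᶠ π ∈ {π : NPart m | IsNoncrossing π}, (forestFactorial π : ℂ)⁻¹ * blockApply h a π

/-- The moment–cumulant relation defining the free cumulants `r`. -/
def FreeMC {A : Type*} [Ring A] (φ : A → ℂ) (r : List A → ℂ) : Prop :=
  ∀ (m : ℕ), 1 ≤ m → ∀ a : Fin m → A,
    φ (List.ofFn a).prod = ∑ᶠ π ∈ {π : NPart m | IsNoncrossing π}, blockApply r a π

/-- The moment–cumulant relation defining the Boolean cumulants `b`. -/
def BooleanMC {A : Type*} [Ring A] (φ : A → ℂ) (b : List A → ℂ) : Prop :=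
  ∀ (m : ℕ), 1 ≤ m → ∀ a : Fin m → A,
    φ (List.ofFn a).prod = ∑ᶠ π ∈ {π : NPart m | IsIntervalPart π}, blockApply b a π

end Partitions

section ForestPosets

open Polynomial

variable {β : Type*}

/-- The strict relation `R` (`R a b` means that `a` is an ancestor of `b`) makes `s` into a
forest. -/
structure IsForestOn (R : β → β → Prop) (s : Finset β) : Prop where
  irrefl : ∀ a ∈ s, ¬ R a a
  trans : ∀ a ∈ s, ∀ b ∈ s, ∀ c ∈ s, R a b → R b c → R a c
  linear : ∀ a ∈ s, ∀ b ∈ s, ∀ c ∈ s, R a c → R b c → a = b ∨ R a b ∨ R b a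

theorem IsForestOn.mono {R : β → β → Prop} {s t : Finset β} (ht : IsForestOn R t)
    (hst : s ⊆ t) : IsForestOn R s where
  irrefl a ha := ht.irrefl a (hst ha)
  trans a ha b hb c hc := ht.trans a (hst ha) b (hst hb) c (hst hc)
  linear a ha b hb c hc := ht.linear a (hst ha) b (hst hb) c (hst hc)

/-- `s` and `t` are disjoint and no element of one is related to an element of the other. -/
def Unrelated (R : β → β → Prop) (s t : Finset β) : Prop :=
  Disjoint s t ∧ ∀ a ∈ s, ∀ b ∈ t, ¬ R a b ∧ ¬ R b a

theorem Unrelated.symm {R : β → β → Prop} {s t : Finset β} (h : Unrelated R s t) :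
    Unrelated R t s :=
  ⟨h.1.symm, fun a ha b hb => (h.2 b hb a ha).symm⟩

theorem Unrelated.mono_left {R : β → β → Prop} {s s' t : Finset β} (h : Unrelated R s t)
    (hs : s' ⊆ s) : Unrelated R s' t :=
  ⟨h.1.mono_left hs, fun a ha b hb => h.2 a (hs ha) b hb⟩

/-- `r` is a strict ancestor of every element of `s`. -/
def IsRootOver (R : β → β → Prop) (r : β) (s : Finset β) : Prop :=
  r ∉ s ∧ ¬ R r r ∧ ∀ v ∈ s, R r v ∧ ¬ R v r

theorem IsRootOver.mono {R : β → β → Prop} {r : β} {s s' : Finset β} (h : IsRootOver R r s)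
    (hs : s' ⊆ s) : IsRootOver R r s' :=
  ⟨fun hr => h.1 (hs hr), h.2.1, fun v hv => h.2.2 v (hs hv)⟩

open Classical in
/-- The subtree of the forest `s` rooted at `v`. -/
noncomputable def subtreeOn (R : β → β → Prop) (s : Finset β) (v : β) : Finset β :=
  s.filter fun w => w = v ∨ R v w

theorem mem_subtreeOn {R : β → β → Prop} {s : Finset β} {v w : β} :
    w ∈ subtreeOn R s v ↔ w ∈ s ∧ (w = v ∨ R v w) := by
  simp [subtreeOn]

theorem subtreeOn_subset (R : β → β → Prop) (s : Finset β) (v : β) : subtreeOn R s v ⊆ s :=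
  fun _ hw => (mem_subtreeOn.1 hw).1

variable [DecidableEq β]

/-- Every finite forest is built from the empty forest by disjoint unions and by adding roots. -/
theorem IsForestOn.induction {R : β → β → Prop} {motive : Finset β → Prop}
    (empty : motive ∅)
    (union : ∀ s t, Unrelated R s t → IsForestOn R (s ∪ t) → motive s → motive t →
      motive (s ∪ t))
    (root : ∀ r s, IsRootOver R r s → IsForestOn R (insert r s) → motive s →
      motive (insert r s))
    {s : Finset β} (hs : IsForestOn R s) : motive s := by
  induction s using Finset.strongInduction with
  | _ s ih =>
  rcases s.eq_empty_or_nonempty with rfl | hne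
  · exact empty
  obtain ⟨r, hr, hmin⟩ : ∃ r ∈ s, ∀ v ∈ s, ¬ R v r := by
    classical
    obtain ⟨r, hr, hmax⟩ := s.exists_max_image (fun v => (subtreeOn R s v).card) hne
    refine ⟨r, hr, fun v hv hvr => ?_⟩
    refine (hmax v hv).not_gt (Finset.card_lt_card ⟨fun w hw => ?_, fun hsub => ?_⟩)
    · rw [mem_subtreeOn] at hw ⊢
      rcases hw with ⟨hws, rfl | hw⟩
      · exact ⟨hws, Or.inr hvr⟩
      · exact ⟨hws, Or.inr (hs.trans v hv r hr w hws hvr hw)⟩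
    · have := hsub (mem_subtreeOn.2 ⟨hv, Or.inl rfl⟩)
      rw [mem_subtreeOn] at this
      rcases this with ⟨-, rfl | h⟩
      · exact hs.irrefl v hv hvr
      · exact hs.irrefl v hv (hs.trans v hv r hr v hv hvr h)
  have hrsub : r ∈ subtreeOn R s r := mem_subtreeOn.2 ⟨hr, Or.inl rfl⟩
  by_cases hall : subtreeOn R s r = s
  · have key := root r (s.erase r) ?_ ?_ (ih _ (Finset.erase_ssubset hr)
      (hs.mono (Finset.erase_subset _ _)))
    · rwa [Finset.insert_erase hr] at key
    · refine ⟨Finset.notMem_erase _ _, hs.irrefl r hr, fun v hv => ?_⟩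
      rw [Finset.mem_erase] at hv
      have h := hv.2
      rw [← hall, mem_subtreeOn] at h
      exact ⟨h.2.resolve_left hv.1, hmin v hv.2⟩
    · rwa [Finset.insert_erase hr]
  · have hss := (subtreeOn_subset R s r).ssubset_of_ne hall
    have hun : subtreeOn R s r ∪ s \ subtreeOn R s r = s :=
      Finset.union_sdiff_of_subset hss.1
    have key := union (subtreeOn R s r) (s \ subtreeOn R s r) ?_ (by rwa [hun])
      (ih _ hss (hs.mono hss.1))
      (ih _ (Finset.sdiff_ssubset hss.1 ⟨r, hrsub⟩) (hs.mono Finset.sdiff_subset))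
    · rwa [hun] at key
    refine ⟨Finset.disjoint_sdiff, fun a ha b hb => ?_⟩
    rw [Finset.mem_sdiff, mem_subtreeOn] at hb
    rw [mem_subtreeOn] at ha
    obtain ⟨hbs, hb⟩ := hb
    obtain ⟨has, ha⟩ := ha
    have hbr : b ≠ r := fun h => hb ⟨hbs, Or.inl h⟩
    have hrb : ¬ R r b := fun h => hb ⟨hbs, Or.inr h⟩
    constructor
    · intro hab
      rcases ha with rfl | ha
      · exact hrb hab
      · exact hrb (hs.trans r hr a has b hbs ha hab)
    · intro hba
      rcases ha with rfl | ha
      · exact hmin b hbs hba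
      · rcases hs.linear b hbs r hr a has hba ha with h | h | h
        · exact hbr h
        · exact hmin b hbs h
        · exact hrb h

theorem subtreeOn_union_left {R : β → β → Prop} {s t : Finset β} (h : Unrelated R s t)
    {v : β} (hv : v ∈ s) : subtreeOn R (s ∪ t) v = subtreeOn R s v := by
  ext w
  simp only [mem_subtreeOn, Finset.mem_union]
  constructor
  · rintro ⟨hw | hw, h'⟩
    · exact ⟨hw, h'⟩
    · rcases h' with rfl | h'
      · exact ⟨hv, Or.inl rfl⟩
      · exact absurd h' (h.2 v hv w hw).1
  · exact fun ⟨hw, h'⟩ => ⟨Or.inl hw, h'⟩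

theorem subtreeOn_union_right {R : β → β → Prop} {s t : Finset β} (h : Unrelated R s t)
    {v : β} (hv : v ∈ t) : subtreeOn R (s ∪ t) v = subtreeOn R t v := by
  rw [Finset.union_comm, subtreeOn_union_left h.symm hv]

theorem subtreeOn_insert_self {R : β → β → Prop} {r : β} {s : Finset β}
    (h : IsRootOver R r s) : subtreeOn R (insert r s) r = insert r s := by
  ext w
  simp only [mem_subtreeOn, Finset.mem_insert]
  exact ⟨fun hw => hw.1, fun hw => ⟨hw, hw.imp id fun hw => (h.2.2 w hw).1⟩⟩

theorem subtreeOn_insert_of_mem {R : β → β → Prop} {r : β} {s : Finset β}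
    (h : IsRootOver R r s) {v : β} (hv : v ∈ s) :
    subtreeOn R (insert r s) v = subtreeOn R s v := by
  ext w
  simp only [mem_subtreeOn, Finset.mem_insert]
  constructor
  · rintro ⟨rfl | hw, h'⟩
    · rcases h' with rfl | h'
      · exact absurd hv h.1
      · exact absurd h' (h.2.2 v hv).2
    · exact ⟨hw, h'⟩
  · exact fun ⟨hw, h'⟩ => ⟨Or.inr hw, h'⟩

/-- A family of polynomials indexed by finite forests which is multiplicative on disjoint unions
and for which adding a root is inverted by the operator `L`. -/
structure ForestFamily (R : β → β → Prop) (L : ℂ[X] →ₗ[ℂ] ℂ[X]) (Ψ : Finset β → ℂ[X]) :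
    Prop where
  empty : Ψ ∅ = 1
  union : ∀ s t, Unrelated R s t → Ψ (s ∪ t) = Ψ s * Ψ t
  eval_zero : ∀ s, s.Nonempty → (Ψ s).eval 0 = 0
  root : ∀ r s, IsRootOver R r s → L (Ψ (insert r s)) = Ψ s
  commute : ∀ p, derivative (L p) = L (derivative p)
  map_C : ∀ c, L (C c) = 0
  injective : ∀ p : ℂ[X], L p = 0 → p.eval 0 = 0 → p = 0

/-- The derivative of a forest family at a forest `s`: sum over all ways to cut off the
subtree at a vertex of `s`. -/
theorem ForestFamily.derivative_eq {R : β → β → Prop} {L : ℂ[X] →ₗ[ℂ] ℂ[X]}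
    {Ψ : Finset β → ℂ[X]} (hΨ : ForestFamily R L Ψ) {s : Finset β} (hs : IsForestOn R s) :
    derivative (Ψ s) = ∑ v ∈ s, C ((derivative (Ψ (subtreeOn R s v))).eval 0) *
      Ψ (s \ subtreeOn R s v) := by
  refine hs.induction (motive := fun s => derivative (Ψ s) = ∑ v ∈ s,
    C ((derivative (Ψ (subtreeOn R s v))).eval 0) * Ψ (s \ subtreeOn R s v)) ?_ ?_ ?_
  · simp [hΨ.empty]
  · intro s t h _ ihs iht
    rw [hΨ.union s t h, derivative_mul, ihs, iht, Finset.sum_union h.1, Finset.sum_mul,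
      Finset.mul_sum]
    congr 1
    · refine Finset.sum_congr rfl fun v hv => ?_
      rw [subtreeOn_union_left h hv, Finset.union_sdiff_distrib,
        Finset.sdiff_eq_self_of_disjoint (h.1.mono_left (subtreeOn_subset R s v)).symm,
        hΨ.union _ _ (h.mono_left Finset.sdiff_subset), mul_assoc]
    · refine Finset.sum_congr rfl fun v hv => ?_
      rw [subtreeOn_union_right h hv, Finset.union_sdiff_distrib,
        Finset.sdiff_eq_self_of_disjoint (h.1.mono_right (subtreeOn_subset R t v)),
        hΨ.union _ _ (h.symm.mono_left Finset.sdiff_subset).symm]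
      ring
  · intro r s h _ ih
    have hsd : ∀ v ∈ s, insert r s \ subtreeOn R s v = insert r (s \ subtreeOn R s v) :=
      fun v _ => Finset.insert_sdiff_of_notMem _ fun hr => h.1 (subtreeOn_subset R s v hr)
    rw [Finset.sum_insert h.1, subtreeOn_insert_self h, Finset.sdiff_self, hΨ.empty, mul_one]
    rw [Finset.sum_congr rfl fun v hv => by
      rw [subtreeOn_insert_of_mem h hv, hsd v hv]]
    refine sub_eq_zero.1 (hΨ.injective _ ?_ ?_)
    · rw [map_sub, map_add, hΨ.map_C, zero_add, ← hΨ.commute, hΨ.root r s h, ih, map_sum,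
        sub_eq_zero]
      refine Finset.sum_congr rfl fun v _ => ?_
      rw [← smul_eq_C_mul, ← smul_eq_C_mul, map_smul,
        hΨ.root r _ (h.mono Finset.sdiff_subset)]
    · rw [eval_sub, eval_add, eval_C, eval_finsetSum, Finset.sum_eq_zero, add_zero, sub_self]
      intro v _
      rw [eval_mul, hΨ.eval_zero _ (Finset.insert_nonempty _ _), mul_zero]

/-- The forest factorial. -/
noncomputable def factorialOn (R : β → β → Prop) (s : Finset β) : ℕ :=
  ∏ v ∈ s, (subtreeOn R s v).card

/-- The polynomial `X ^ |s| / s!`. -/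
noncomputable def volumePoly (R : β → β → Prop) (s : Finset β) : ℂ[X] :=
  C ((factorialOn R s : ℂ)⁻¹) * X ^ s.card

theorem factorialOn_union {R : β → β → Prop} {s t : Finset β} (h : Unrelated R s t) :
    factorialOn R (s ∪ t) = factorialOn R s * factorialOn R t := by
  unfold factorialOn
  rw [Finset.prod_union h.1]
  congr 1
  · exact Finset.prod_congr rfl fun v hv => by rw [subtreeOn_union_left h hv]
  · exact Finset.prod_congr rfl fun v hv => by rw [subtreeOn_union_right h hv]

theorem factorialOn_insert {R : β → β → Prop} {r : β} {s : Finset β} (h : IsRootOver R r s) :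
    factorialOn R (insert r s) = (s.card + 1) * factorialOn R s := by
  unfold factorialOn
  rw [Finset.prod_insert h.1, subtreeOn_insert_self h, Finset.card_insert_of_notMem h.1]
  congr 1
  exact Finset.prod_congr rfl fun v hv => by rw [subtreeOn_insert_of_mem h hv]

theorem forestFamily_volumePoly (R : β → β → Prop) :
    ForestFamily R derivative (volumePoly R) where
  empty := by simp [volumePoly, factorialOn]
  union s t h := by
    simp only [volumePoly, factorialOn_union h, Finset.card_union_of_disjoint h.1, pow_add,
      Nat.cast_mul, mul_inv, C_mul]
    ring
  eval_zero s hs := by simp [volumePoly, hs.card_pos.ne']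
  root r s h := by
    have h0 : ((s.card : ℂ) + 1) ≠ 0 := by exact_mod_cast s.card.succ_ne_zero
    simp only [volumePoly, factorialOn_insert h, Finset.card_insert_of_notMem h.1,
      derivative_C_mul_X_pow, Nat.cast_mul, Nat.cast_add, Nat.cast_one, Nat.add_sub_cancel]
    congr 2
    field_simp
  commute _ := rfl
  map_C c := derivative_C
  injective p hp h0 := by
    have := derivative_eq_zero.1 hp
    rw [eq_C_of_natDegree_eq_zero this] at h0 ⊢
    simpa using h0

omit [DecidableEq β] in
theorem derivative_volumePoly_eval_zero (R : β → β → Prop) {s : Finset β} :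
    (derivative (volumePoly R s)).eval 0 =
      if s.card = 1 then (factorialOn R s : ℂ)⁻¹ else 0 := by
  rcases hs : s.card with _ | _ | k <;> simp [volumePoly, hs]

/-- The number of surjective strictly order-preserving maps `s → {1, …, k}`. -/
noncomputable def surjCount (R : β → β → Prop) (s : Finset β) (k : ℕ) : ℕ :=
  Nat.card {f : {v // v ∈ s} → Fin k // Function.Surjective f ∧
    ∀ v w : {v // v ∈ s}, R v.1 w.1 → f v < f w}

/-- The number of strictly order-preserving maps `s → {1, …, m}`. -/
noncomputable def strictCount (R : β → β → Prop) (s : Finset β) (m : ℕ) : ℕ :=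
  Nat.card {f : {v // v ∈ s} → Fin m // ∀ v w : {v // v ∈ s}, R v.1 w.1 → f v < f w}

omit [DecidableEq β] in
theorem surjCount_eq_zero (R : β → β → Prop) {s : Finset β} {k : ℕ} (hk : s.card < k) :
    surjCount R s k = 0 := by
  have : IsEmpty {f : {v // v ∈ s} → Fin k // Function.Surjective f ∧
      ∀ v w : {v // v ∈ s}, R v.1 w.1 → f v < f w} := by
    refine ⟨fun f => ?_⟩
    have := Fintype.card_le_of_surjective f.1 f.2.1
    simp at this
    omega
  exact Nat.card_of_isEmpty

omit [DecidableEq β] in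
theorem strictCount_eq_sum (R : β → β → Prop) (s : Finset β) (m : ℕ) :
    strictCount R s m = ∑ k ∈ Finset.range (m + 1), m.choose k * surjCount R s k := by
  have e : Function.Bijective (fun x : (Σ I : Finset (Fin m),
      {f : {v // v ∈ s} → Fin I.card // Function.Surjective f ∧
        ∀ v w : {v // v ∈ s}, R v.1 w.1 → f v < f w}) =>
      (⟨fun v => x.1.orderEmbOfFin rfl (x.2.1 v), fun v w h => by
        simpa using x.2.2.2 v w h⟩ :
        {f : {v // v ∈ s} → Fin m // ∀ v w : {v // v ∈ s}, R v.1 w.1 → f v < f w})) := by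
    constructor
    · rintro ⟨I, f, hf, hf'⟩ ⟨J, g, hg, hg'⟩ h
      simp only [Subtype.mk.injEq] at h
      have hI : ∀ (I : Finset (Fin m)) (f : {v // v ∈ s} → Fin I.card),
          Function.Surjective f → (I : Set (Fin m)) =
            Set.range (fun v => I.orderEmbOfFin rfl (f v)) := by
        intro I f hf
        rw [← Finset.range_orderEmbOfFin I rfl]
        exact (hf.range_comp _).symm
      have hIJ : I = J := by
        rw [← Finset.coe_inj, hI I f hf, hI J g hg, h]
      subst hIJ
      congr
      ext v : 1
      exact (I.orderEmbOfFin rfl).injective (congrFun h v)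
    · rintro ⟨f, hf⟩
      let I : Finset (Fin m) := Finset.univ.image f
      have hmem : ∀ v, f v ∈ I := fun v => Finset.mem_image_of_mem f (Finset.mem_univ v)
      refine ⟨⟨I, fun v => (I.orderIsoOfFin rfl).symm ⟨f v, hmem v⟩, ?_, ?_⟩, ?_⟩
      · intro i
        obtain ⟨v, -, hv⟩ := Finset.mem_image.1 (I.orderIsoOfFin rfl i).2
        refine ⟨v, ?_⟩
        rw [OrderIso.symm_apply_eq]
        exact Subtype.ext hv
      · intro v w h
        simpa using hf v w h
      · ext v : 2
        simp only [← Finset.coe_orderIsoOfFin_apply, OrderIso.apply_symm_apply]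
  classical
  rw [strictCount, ← Nat.card_congr (Equiv.ofBijective _ e), Nat.card_sigma]
  have := Finset.sum_powerset_apply_card (fun k => surjCount R s k)
    (x := (Finset.univ : Finset (Fin m)))
  rw [Finset.powerset_univ, Finset.card_fin] at this
  exact this

theorem strictCount_union {R : β → β → Prop} {s t : Finset β} (h : Unrelated R s t) (m : ℕ) :
    strictCount R (s ∪ t) m = strictCount R s m * strictCount R t m := by
  have hs : ∀ v ∈ s, v ∈ s ∪ t := fun v hv => Finset.mem_union_left _ hv
  have ht : ∀ v ∈ t, v ∈ s ∪ t := fun v hv => Finset.mem_union_right _ hv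
  have hst : ∀ v ∈ s ∪ t, v ∉ s → v ∈ t := fun v hv hvs =>
    (Finset.mem_union.1 hv).resolve_left hvs
  rw [strictCount, strictCount, strictCount, ← Nat.card_prod]
  refine Nat.card_congr
    { toFun := fun f =>
        (⟨fun v => f.1 ⟨v.1, hs v.1 v.2⟩, fun v w hvw => f.2 _ _ hvw⟩,
          ⟨fun v => f.1 ⟨v.1, ht v.1 v.2⟩, fun v w hvw => f.2 _ _ hvw⟩)
      invFun := fun g => ⟨fun v => if hv : v.1 ∈ s then g.1.1 ⟨v.1, hv⟩
        else g.2.1 ⟨v.1, hst v.1 v.2 hv⟩, ?_⟩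
      left_inv := ?_
      right_inv := ?_ }
  · rintro ⟨v, hv⟩ ⟨w, hw⟩ hvw
    simp only at hvw ⊢
    split_ifs with h1 h2 h2
    · exact g.1.2 _ _ hvw
    · exact absurd hvw (h.2 v h1 w (hst w hw h2)).1
    · exact absurd hvw (h.2 w h2 v (hst v hv h1)).2
    · exact g.2.2 _ _ hvw
  · intro f
    ext v : 2
    simp
  · rintro ⟨g₁, g₂⟩
    refine Prod.ext (Subtype.ext (funext fun v => ?_)) (Subtype.ext (funext fun v => ?_))
    · simp
    · have : v.1 ∉ s := fun hv => Finset.disjoint_left.1 h.1 hv v.2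
      simp [this]

theorem strictCount_insert {R : β → β → Prop} {r : β} {s : Finset β} (h : IsRootOver R r s)
    (m : ℕ) : strictCount R (insert r s) (m + 1) =
      strictCount R (insert r s) m + strictCount R s m := by
  have hs : ∀ v ∈ insert r s, v ≠ r → v ∈ s := fun v hv hvr =>
    (Finset.mem_insert.1 hv).resolve_left hvr
  have hr : r ∈ insert r s := Finset.mem_insert_self r s
  rw [strictCount, strictCount, strictCount, ← Nat.card_sum]
  symm
  refine Nat.card_congr (Equiv.ofBijective (Sum.elim
    (fun g => ⟨fun v => (g.1 v).succ, fun v w hvw => Fin.succ_lt_succ_iff.2 (g.2 v w hvw)⟩)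
    (fun g => ⟨fun v => if hv : v.1 = r then 0 else (g.1 ⟨v.1, hs v.1 v.2 hv⟩).succ, ?_⟩))
    ⟨?_, ?_⟩)
  · rintro ⟨v, hv⟩ ⟨w, hw⟩ hvw
    simp only at hvw ⊢
    split_ifs with h1 h2 h2
    · subst h1 h2
      exact absurd hvw h.2.1
    · exact Fin.succ_pos _
    · subst h2
      exact absurd hvw (h.2.2 v (hs v hv h1)).2
    · exact Fin.succ_lt_succ_iff.2 (g.2 _ _ hvw)
  · rintro (⟨f, hf⟩ | ⟨f, hf⟩) (⟨g, hg⟩ | ⟨g, hg⟩) hfg <;>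
      simp only [Sum.elim_inl, Sum.elim_inr, Subtype.mk.injEq] at hfg
    · congr 2
      funext v
      simpa using congrFun hfg v
    · simpa using congrFun hfg ⟨r, hr⟩
    · simpa using (congrFun hfg ⟨r, hr⟩).symm
    · congr 2
      funext v
      have hv : v.1 ≠ r := fun hv => h.1 (hv ▸ v.2)
      simpa [hv] using congrFun hfg ⟨v.1, Finset.mem_insert_of_mem v.2⟩
  · rintro ⟨f, hf⟩
    have hpos : ∀ v : {v // v ∈ insert r s}, v.1 ≠ r → f v ≠ 0 := fun v hv =>
      (lt_of_le_of_lt (Fin.zero_le _)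
        (hf ⟨r, hr⟩ v (h.2.2 v.1 (hs v.1 v.2 hv)).1)).ne'
    by_cases h0 : f ⟨r, hr⟩ = 0
    · refine ⟨Sum.inr ⟨fun v => (f ⟨v.1, Finset.mem_insert_of_mem v.2⟩).pred
        (hpos _ fun hv => h.1 (hv ▸ v.2)), fun v w hvw => ?_⟩, ?_⟩
      · exact Fin.pred_lt_pred_iff.2 (hf _ _ hvw)
      · refine Subtype.ext (funext fun v => ?_)
        rcases v with ⟨v, hv⟩
        by_cases hvr : v = r
        · subst hvr
          simp [h0]
        · simp [hvr]
    · have hpos' : ∀ v, f v ≠ 0 := by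
        rintro ⟨v, hv⟩
        by_cases hvr : v = r
        · subst hvr
          exact h0
        · exact hpos _ hvr
      refine ⟨Sum.inl ⟨fun v => (f v).pred (hpos' v), fun v w hvw => ?_⟩, ?_⟩
      · exact Fin.pred_lt_pred_iff.2 (hf _ _ hvw)
      · refine Subtype.ext (funext fun v => ?_)
        simp

/-- The strict order polynomial. -/
noncomputable def strictOrderPoly (R : β → β → Prop) (s : Finset β) : ℂ[X] :=
  ∑ k ∈ Finset.range (s.card + 1),
    C ((surjCount R s k : ℂ) / (k.factorial : ℂ)) * descPochhammer ℂ k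

omit [DecidableEq β] in
theorem strictOrderPoly_eval_natCast (R : β → β → Prop) (s : Finset β) (m : ℕ) :
    (strictOrderPoly R s).eval (m : ℂ) = strictCount R s m := by
  have h1 : ∀ k, ((surjCount R s k : ℂ) / (k.factorial : ℂ)) *
      (descPochhammer ℂ k).eval (m : ℂ) = ((m.choose k * surjCount R s k : ℕ) : ℂ) := by
    intro k
    have hk : (k.factorial : ℂ) ≠ 0 := by exact_mod_cast k.factorial_ne_zero
    rw [descPochhammer_eval_eq_descFactorial, Nat.descFactorial_eq_factorial_mul_choose]
    push_cast
    field_simp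
  rw [strictOrderPoly, eval_finsetSum, strictCount_eq_sum, Nat.cast_sum]
  simp only [eval_mul, eval_C, h1]
  trans ∑ k ∈ Finset.range (m + s.card + 1), ((m.choose k * surjCount R s k : ℕ) : ℂ)
  · refine Finset.sum_subset (Finset.range_subset_range.2 (by omega)) fun k _ hk => ?_
    rw [surjCount_eq_zero R (by simpa using hk), mul_zero, Nat.cast_zero]
  · refine (Finset.sum_subset (Finset.range_subset_range.2 (by omega)) fun k _ hk => ?_).symm
    rw [Nat.choose_eq_zero_of_lt (by simpa using hk), zero_mul, Nat.cast_zero]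

theorem Polynomial.eq_of_eval_natCast {p q : ℂ[X]}
    (h : ∀ m : ℕ, p.eval (m : ℂ) = q.eval (m : ℂ)) : p = q :=
  eq_of_infinite_eval_eq p q
    ((Set.infinite_range_of_injective (Nat.cast_injective (R := ℂ))).mono
      (by rintro _ ⟨m, rfl⟩; exact h m))

theorem strictOrderPoly_empty (R : β → β → Prop) : strictOrderPoly R ∅ = 1 := by
  refine Polynomial.eq_of_eval_natCast fun m => ?_
  rw [strictOrderPoly_eval_natCast, strictCount]
  simp

theorem strictOrderPoly_union {R : β → β → Prop} {s t : Finset β} (h : Unrelated R s t) :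
    strictOrderPoly R (s ∪ t) = strictOrderPoly R s * strictOrderPoly R t := by
  refine Polynomial.eq_of_eval_natCast fun m => ?_
  simp only [eval_mul, strictOrderPoly_eval_natCast, strictCount_union h, Nat.cast_mul]

theorem strictOrderPoly_insert {R : β → β → Prop} {r : β} {s : Finset β}
    (h : IsRootOver R r s) :
    (strictOrderPoly R (insert r s)).comp (X + 1) =
      strictOrderPoly R (insert r s) + strictOrderPoly R s := by
  refine Polynomial.eq_of_eval_natCast fun m => ?_
  have := strictOrderPoly_eval_natCast R (insert r s) (m + 1)
  push_cast at this
  simp only [eval_comp, eval_add, eval_X, eval_one, this, strictOrderPoly_eval_natCast,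
    strictCount_insert h, Nat.cast_add]

omit [DecidableEq β] in
theorem strictOrderPoly_eval_zero (R : β → β → Prop) {s : Finset β} (hs : s.Nonempty) :
    (strictOrderPoly R s).eval 0 = 0 := by
  obtain ⟨v, hv⟩ := hs
  have := strictOrderPoly_eval_natCast R s 0
  rw [Nat.cast_zero] at this
  have he : IsEmpty ({v // v ∈ s} → Fin 0) := ⟨fun f => (f ⟨v, hv⟩).elim0⟩
  rw [this, strictCount, Nat.card_of_isEmpty, Nat.cast_zero]

theorem descPochhammer_eval_neg_one (k : ℕ) :
    (descPochhammer ℂ k).eval (-1) = (-1) ^ k * k.factorial := by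
  induction k with
  | zero => simp
  | succ k ih =>
    rw [descPochhammer_succ_eval, ih, Nat.factorial_succ]
    push_cast
    ring

theorem derivative_descPochhammer_eval_zero (k : ℕ) :
    (derivative (descPochhammer ℂ (k + 1))).eval 0 = (-1) ^ k * k.factorial := by
  rw [descPochhammer_succ_left, derivative_mul]
  simp [eval_comp, descPochhammer_eval_neg_one]

omit [DecidableEq β] in
theorem derivative_strictOrderPoly_eval_zero (R : β → β → Prop) (s : Finset β) :
    (derivative (strictOrderPoly R s)).eval 0 =
      ∑ k ∈ Finset.Icc 1 s.card, ((-1 : ℂ) ^ (k + 1) / (k : ℂ)) * (surjCount R s k : ℂ) := by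
  rw [strictOrderPoly, derivative_sum, eval_finsetSum, Finset.sum_range_succ',
    ← Finset.Ico_add_one_right_eq_Icc, Finset.sum_Ico_eq_sum_range]
  simp only [descPochhammer_zero, mul_one, derivative_C, eval_zero, add_zero]
  refine Finset.sum_congr (by simp) fun k _ => ?_
  have hk : (k.factorial : ℂ) ≠ 0 := by exact_mod_cast k.factorial_ne_zero
  have hk' : (k : ℂ) + 1 ≠ 0 := by exact_mod_cast k.succ_ne_zero
  rw [derivative_C_mul, eval_mul, eval_C, derivative_descPochhammer_eval_zero,
    Nat.factorial_succ, add_comm 1 k]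
  push_cast
  field_simp
  ring

/-- The weak order polynomial, defined from the strict one by reciprocity. -/
noncomputable def weakOrderPoly (R : β → β → Prop) (s : Finset β) : ℂ[X] :=
  C ((-1) ^ s.card) * (strictOrderPoly R s).comp (-X)

/-- The backward difference operator on polynomials. -/
noncomputable def backwardDiff : ℂ[X] →ₗ[ℂ] ℂ[X] :=
  LinearMap.id - (aeval (X - 1 : ℂ[X])).toLinearMap

theorem backwardDiff_apply (p : ℂ[X]) : backwardDiff p = p - p.comp (X - 1) := rfl

theorem forestFamily_weakOrderPoly (R : β → β → Prop) :
    ForestFamily R backwardDiff (weakOrderPoly R) where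
  empty := by simp [weakOrderPoly, strictOrderPoly_empty]
  union s t h := by
    simp only [weakOrderPoly, strictOrderPoly_union h, Finset.card_union_of_disjoint h.1,
      pow_add, C_mul, mul_comp]
    ring
  eval_zero s hs := by
    simp [weakOrderPoly, eval_comp, strictOrderPoly_eval_zero R hs]
  root r s h := by
    have key := congrArg (fun p : ℂ[X] => p.comp (-X)) (strictOrderPoly_insert h)
    simp only [comp_assoc, add_comp, X_comp, one_comp] at key
    have h1 : (-X : ℂ[X]).comp (X - 1) = -X + 1 := by
      simp only [neg_comp, X_comp]
      ring
    rw [backwardDiff_apply, weakOrderPoly, weakOrderPoly, mul_comp, C_comp, comp_assoc, h1,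
      key, Finset.card_insert_of_notMem h.1, pow_succ, C_mul, C_neg, C_1]
    ring
  commute p := by
    simp [backwardDiff_apply, derivative_comp]
  map_C c := by simp [backwardDiff_apply]
  injective p hp h0 := by
    refine Polynomial.eq_of_eval_natCast fun m => ?_
    induction m with
    | zero => simpa using h0
    | succ m ih =>
      have := congrArg (eval ((m + 1 : ℕ) : ℂ)) hp
      simp only [backwardDiff_apply, eval_sub, eval_comp, eval_X, eval_one, eval_zero,
        Nat.cast_add, Nat.cast_one, add_sub_cancel_right, ih, sub_zero] at this
      simpa using this

theorem weakOrderPoly_eval_one {R : β → β → Prop} {s : Finset β} (hs : IsForestOn R s) :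
    (weakOrderPoly R s).eval 1 = 1 := by
  have hΨ := forestFamily_weakOrderPoly R
  refine hs.induction (motive := fun s => (weakOrderPoly R s).eval 1 = 1) ?_ ?_ ?_
  · simp [hΨ.empty]
  · intro s t h _ ihs iht
    rw [hΨ.union s t h, eval_mul, ihs, iht, one_mul]
  · intro r s h _ ih
    have := congrArg (eval 1) (hΨ.root r s h)
    simpa [backwardDiff_apply, eval_comp, ih,
      hΨ.eval_zero _ (Finset.insert_nonempty r s)] using this

omit [DecidableEq β] in
theorem derivative_weakOrderPoly_eval_zero (R : β → β → Prop) {s : Finset β}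
    (hs : s.Nonempty) : (derivative (weakOrderPoly R s)).eval 0 =
      (-1) ^ (s.card - 1) * ∑ k ∈ Finset.Icc 1 s.card,
        ((-1 : ℂ) ^ (k + 1) / (k : ℂ)) * (surjCount R s k : ℂ) := by
  obtain ⟨k, hk⟩ := Nat.exists_eq_succ_of_ne_zero hs.card_pos.ne'
  rw [← derivative_strictOrderPoly_eval_zero, weakOrderPoly, derivative_C_mul,
    derivative_comp, hk]
  simp [eval_comp, pow_succ]

end ForestPosets

section NoncrossingSums

open Polynomial

variable {n : ℕ}

/-- `P` is the set of blocks of a noncrossing partition of `S`. -/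
structure IsNoncrossingOn (S : Finset (Fin n)) (P : Finset (Finset (Fin n))) : Prop where
  nonempty : ∀ V ∈ P, V.Nonempty
  subset : ∀ V ∈ P, V ⊆ S
  cover : ∀ x ∈ S, ∃ V ∈ P, x ∈ V
  disjoint : ∀ V ∈ P, ∀ W ∈ P, ∀ x, x ∈ V → x ∈ W → V = W
  noncrossing : ∀ a b c d : Fin n, a < b → b < c → c < d →
    ∀ V ∈ P, ∀ W ∈ P, a ∈ V → c ∈ V → b ∈ W → d ∈ W → V = W

/-- `V` is a strict ancestor of `W` in the nesting order. -/
def StrictlyNests (V W : Finset (Fin n)) : Prop := NestedIn W V ∧ V ≠ W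

/-- Some block of `P` contains all the others in its convex hull. -/
def HasOuterBlock (P : Finset (Finset (Fin n))) : Prop := ∃ V ∈ P, ∀ W ∈ P, NestedIn W V

open Classical in
/-- The set of noncrossing partitions of `S`. -/
noncomputable def noncrossingOn (S : Finset (Fin n)) : Finset (Finset (Finset (Fin n))) :=
  Finset.univ.filter fun P => IsNoncrossingOn S P

theorem mem_noncrossingOn {S : Finset (Fin n)} {P : Finset (Finset (Fin n))} :
    P ∈ noncrossingOn S ↔ IsNoncrossingOn S P := by
  simp [noncrossingOn]

open Classical in
/-- The set of noncrossing partitions of `S` with an outer block. -/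
noncomputable def irreducibleOn (S : Finset (Fin n)) : Finset (Finset (Finset (Fin n))) :=
  (noncrossingOn S).filter HasOuterBlock

theorem mem_irreducibleOn {S : Finset (Fin n)} {P : Finset (Finset (Fin n))} :
    P ∈ irreducibleOn S ↔ IsNoncrossingOn S P ∧ HasOuterBlock P := by
  simp [irreducibleOn, mem_noncrossingOn]

open Classical in
/-- The nonempty subsets of `S` that are intervals of `S`. -/
noncomputable def intervalsOf (S : Finset (Fin n)) : Finset (Finset (Fin n)) :=
  S.powerset.filter fun J => J.Nonempty ∧ ∀ x ∈ J, ∀ y ∈ J, ∀ z ∈ S, x ≤ z → z ≤ y → z ∈ J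

theorem mem_intervalsOf {S J : Finset (Fin n)} : J ∈ intervalsOf S ↔
    J ⊆ S ∧ J.Nonempty ∧ ∀ x ∈ J, ∀ y ∈ J, ∀ z ∈ S, x ≤ z → z ≤ y → z ∈ J := by
  simp [intervalsOf]

theorem NestedIn.refl (V : Finset (Fin n)) : NestedIn V V :=
  fun w hw => ⟨⟨w, hw, le_rfl⟩, ⟨w, hw, le_rfl⟩⟩

theorem NestedIn.trans {U V W : Finset (Fin n)} (h₁ : NestedIn U V) (h₂ : NestedIn V W) :
    NestedIn U W := by
  intro u hu
  obtain ⟨⟨a, ha, hau⟩, ⟨b, hb, hub⟩⟩ := h₁ u hu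
  obtain ⟨⟨c, hc, hca⟩, -⟩ := h₂ a ha
  obtain ⟨-, ⟨d, hd, hbd⟩⟩ := h₂ b hb
  exact ⟨⟨c, hc, hca.trans hau⟩, ⟨d, hd, hub.trans hbd⟩⟩

theorem or_strictlyNests_iff {V W : Finset (Fin n)} :
    (W = V ∨ StrictlyNests V W) ↔ NestedIn W V := by
  constructor
  · rintro (rfl | h)
    · exact NestedIn.refl _
    · exact h.1
  · intro h
    by_cases hVW : W = V
    · exact Or.inl hVW
    · exact Or.inr ⟨h, fun h => hVW h.symm⟩

theorem mem_subtreeOn_strictlyNests {P : Finset (Finset (Fin n))} {V W : Finset (Fin n)} :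
    W ∈ subtreeOn StrictlyNests P V ↔ W ∈ P ∧ NestedIn W V := by
  rw [mem_subtreeOn, or_strictlyNests_iff]

namespace IsNoncrossingOn

variable {S J : Finset (Fin n)} {P Q : Finset (Finset (Fin n))}

theorem eq_of_nestedIn (hP : IsNoncrossingOn S P) {V W : Finset (Fin n)} (hV : V ∈ P)
    (hW : W ∈ P) (h₁ : NestedIn V W) (h₂ : NestedIn W V) : V = W := by
  have hne := hP.nonempty V hV
  obtain ⟨⟨y, hy, hyx⟩, -⟩ := h₁ _ (V.min'_mem hne)
  obtain ⟨⟨z, hz, hzy⟩, -⟩ := h₂ y hy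
  have hyV : y = V.min' hne := le_antisymm hyx ((V.min'_le z hz).trans hzy)
  exact hP.disjoint V hV W hW y (hyV ▸ V.min'_mem hne) hy

/-- A block with an element between two elements of another block is nested in it. -/
theorem nestedIn_of_between (hP : IsNoncrossingOn S P) {V W : Finset (Fin n)} (hV : V ∈ P)
    (hW : W ∈ P) {a w b : Fin n} (ha : a ∈ V) (hw : w ∈ W) (hb : b ∈ V) (haw : a ≤ w)
    (hwb : w ≤ b) : NestedIn W V := by
  by_cases hVW : V = W
  · rw [hVW]
    exact NestedIn.refl W
  have hne : ∀ x ∈ V, ∀ y ∈ W, x ≠ y := by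
    rintro x hx y hy rfl
    exact hVW (hP.disjoint V hV W hW x hx hy)
  have haw' := lt_of_le_of_ne haw (hne a ha w hw)
  have hwb' := lt_of_le_of_ne hwb (hne b hb w hw).symm
  intro u hu
  constructor
  · by_contra! hcon
    exact hVW (hP.noncrossing u a w b (hcon a ha) haw' hwb' W hW V hV hu hw ha hb).symm
  · by_contra! hcon
    exact hVW (hP.noncrossing a w b u haw' hwb' (hcon b hb) V hV W hW ha hb hw hu)

theorem isForestOn (hP : IsNoncrossingOn S P) : IsForestOn StrictlyNests P where
  irrefl V _ h := h.2 rfl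
  trans U hU V hV W hW h₁ h₂ := by
    refine ⟨h₂.1.trans h₁.1, ?_⟩
    rintro rfl
    exact h₁.2 (hP.eq_of_nestedIn hU hV h₂.1 h₁.1)
  linear V hV W hW U hU h₁ h₂ := by
    obtain ⟨x, hx⟩ := hP.nonempty U hU
    obtain ⟨⟨a, ha, hax⟩, ⟨b, hb, hxb⟩⟩ := h₁.1 x hx
    obtain ⟨⟨c, hc, hcx⟩, ⟨d, hd, hxd⟩⟩ := h₂.1 x hx
    by_cases hVW : V = W
    · exact Or.inl hVW
    rcases le_total a c with hac | hca
    · exact Or.inr (Or.inl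
        ⟨hP.nestedIn_of_between hV hW ha hc hb hac (hcx.trans hxb), hVW⟩)
    · exact Or.inr (Or.inr
        ⟨hP.nestedIn_of_between hW hV hc ha hd hca (hax.trans hxd), Ne.symm hVW⟩)

theorem sup_eq (hP : IsNoncrossingOn S P) : P.sup id = S := by
  ext x
  simp only [Finset.mem_sup, id]
  exact ⟨fun ⟨V, hV, hx⟩ => hP.subset V hV hx, hP.cover x⟩

theorem of_subset (hP : IsNoncrossingOn S P) (hQ : Q ⊆ P) : IsNoncrossingOn (Q.sup id) Q where
  nonempty V hV := hP.nonempty V (hQ hV)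
  subset V hV := Finset.le_sup (f := id) hV
  cover x hx := by simpa only [Finset.mem_sup, id] using hx
  disjoint V hV W hW := hP.disjoint V (hQ hV) W (hQ hW)
  noncrossing a b c d hab hbc hcd V hV W hW :=
    hP.noncrossing a b c d hab hbc hcd V (hQ hV) W (hQ hW)

theorem sup_sdiff (hP : IsNoncrossingOn S P) (hQ : Q ⊆ P) :
    (P \ Q).sup id = S \ Q.sup id := by
  ext x
  simp only [Finset.mem_sup, Finset.mem_sdiff, id, not_exists, not_and]
  constructor
  · rintro ⟨V, ⟨hV, hVQ⟩, hx⟩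
    refine ⟨hP.subset V hV hx, fun W hW hxW => hVQ ?_⟩
    rwa [hP.disjoint V hV W (hQ hW) x hx hxW]
  · rintro ⟨hx, hxQ⟩
    obtain ⟨V, hV, hxV⟩ := hP.cover x hx
    exact ⟨V, ⟨hV, fun hVQ => hxQ V hVQ hxV⟩, hxV⟩

theorem mem_subtree_sup (hP : IsNoncrossingOn S P) {V : Finset (Fin n)} (hV : V ∈ P)
    {x : Fin n} : x ∈ (subtreeOn StrictlyNests P V).sup id ↔
      x ∈ S ∧ (∃ a ∈ V, a ≤ x) ∧ ∃ b ∈ V, x ≤ b := by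
  simp only [Finset.mem_sup, id, mem_subtreeOn_strictlyNests]
  constructor
  · rintro ⟨W, ⟨hW, hWV⟩, hx⟩
    exact ⟨hP.subset W hW hx, hWV x hx⟩
  · rintro ⟨hx, ⟨a, ha, hax⟩, ⟨b, hb, hxb⟩⟩
    obtain ⟨W, hW, hxW⟩ := hP.cover x hx
    exact ⟨W, ⟨hW, hP.nestedIn_of_between hV hW ha hxW hb hax hxb⟩, hxW⟩

theorem subtree_sup_mem_intervalsOf (hP : IsNoncrossingOn S P) {V : Finset (Fin n)}
    (hV : V ∈ P) : (subtreeOn StrictlyNests P V).sup id ∈ intervalsOf S := by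
  rw [mem_intervalsOf]
  refine ⟨fun x hx => ((hP.mem_subtree_sup hV).1 hx).1, ?_, fun x hx y hy z hz hxz hzy => ?_⟩
  · obtain ⟨x, hx⟩ := hP.nonempty V hV
    exact ⟨x, (hP.mem_subtree_sup hV).2
      ⟨hP.subset V hV hx, ⟨x, hx, le_rfl⟩, ⟨x, hx, le_rfl⟩⟩⟩
  · obtain ⟨-, ⟨a, ha, hax⟩, -⟩ := (hP.mem_subtree_sup hV).1 hx
    obtain ⟨-, -, ⟨b, hb, hyb⟩⟩ := (hP.mem_subtree_sup hV).1 hy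
    exact (hP.mem_subtree_sup hV).2
      ⟨hz, ⟨a, ha, hax.trans hxz⟩, ⟨b, hb, hzy.trans hyb⟩⟩

theorem disjoint_of_disjoint (hP : IsNoncrossingOn (S \ J) P) (hQ : IsNoncrossingOn J Q) :
    ∀ V ∈ P, ∀ W ∈ Q, ∀ x ∈ V, x ∉ W := fun V hV W hW _ hxV hxW =>
  (Finset.mem_sdiff.1 (hP.subset V hV hxV)).2 (hQ.subset W hW hxW)

theorem union (hJ : J ∈ intervalsOf S) (hP : IsNoncrossingOn (S \ J) P)
    (hQ : IsNoncrossingOn J Q) : IsNoncrossingOn S (P ∪ Q) := by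
  obtain ⟨hJS, -, hconv⟩ := mem_intervalsOf.1 hJ
  have hPJ : ∀ V ∈ P, ∀ x ∈ V, x ∈ S ∧ x ∉ J := fun V hV x hx =>
    Finset.mem_sdiff.1 (hP.subset V hV hx)
  have hdis := disjoint_of_disjoint hP hQ
  refine ⟨fun V hV => ?_, fun V hV => ?_, fun x hx => ?_, fun V hV W hW x hxV hxW => ?_,
    fun a b c d hab hbc hcd V hV W hW ha hc hb hd => ?_⟩
  · exact (Finset.mem_union.1 hV).elim (hP.nonempty V) (hQ.nonempty V)
  · exact (Finset.mem_union.1 hV).elim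
      (fun hV => (hP.subset V hV).trans Finset.sdiff_subset)
      (fun hV => (hQ.subset V hV).trans hJS)
  · by_cases hxJ : x ∈ J
    · obtain ⟨V, hV, hxV⟩ := hQ.cover x hxJ
      exact ⟨V, Finset.mem_union_right _ hV, hxV⟩
    · obtain ⟨V, hV, hxV⟩ := hP.cover x (Finset.mem_sdiff.2 ⟨hx, hxJ⟩)
      exact ⟨V, Finset.mem_union_left _ hV, hxV⟩
  · rcases Finset.mem_union.1 hV with hV | hV <;> rcases Finset.mem_union.1 hW with hW | hW
    · exact hP.disjoint V hV W hW x hxV hxW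
    · exact absurd hxW (hdis V hV W hW x hxV)
    · exact absurd hxV (hdis W hW V hV x hxW)
    · exact hQ.disjoint V hV W hW x hxV hxW
  · rcases Finset.mem_union.1 hV with hV | hV <;> rcases Finset.mem_union.1 hW with hW | hW
    · exact hP.noncrossing a b c d hab hbc hcd V hV W hW ha hc hb hd
    · exact absurd (hconv b (hQ.subset W hW hb) d (hQ.subset W hW hd) c
        (hPJ V hV c hc).1 hbc.le hcd.le) (hPJ V hV c hc).2
    · exact absurd (hconv a (hQ.subset V hV ha) c (hQ.subset V hV hc) b
        (hPJ W hW b hb).1 hab.le hbc.le) (hPJ W hW b hb).2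
    · exact hQ.noncrossing a b c d hab hbc hcd V hV W hW ha hc hb hd

theorem disjoint_parts (hP : IsNoncrossingOn (S \ J) P) (hQ : IsNoncrossingOn J Q) :
    Disjoint P Q := by
  rw [Finset.disjoint_left]
  intro V hV hVQ
  obtain ⟨x, hx⟩ := hP.nonempty V hV
  exact disjoint_of_disjoint hP hQ V hV V hVQ x hx hx

theorem subtreeOn_union (hJ : J ∈ intervalsOf S) (hP : IsNoncrossingOn (S \ J) P)
    (hQ : IsNoncrossingOn J Q) {V : Finset (Fin n)} (hV : V ∈ Q)
    (hV' : ∀ W ∈ Q, NestedIn W V) : subtreeOn StrictlyNests (P ∪ Q) V = Q := by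
  obtain ⟨-, -, hconv⟩ := mem_intervalsOf.1 hJ
  ext W
  rw [mem_subtreeOn_strictlyNests, Finset.mem_union]
  constructor
  · rintro ⟨hW | hW, hWV⟩
    · obtain ⟨x, hx⟩ := hP.nonempty W hW
      obtain ⟨⟨a, ha, hax⟩, ⟨b, hb, hxb⟩⟩ := hWV x hx
      have hxS := Finset.mem_sdiff.1 (hP.subset W hW hx)
      exact absurd (hconv a (hQ.subset V hV ha) b (hQ.subset V hV hb) x hxS.1 hax hxb) hxS.2
    · exact hW
  · exact fun hW => ⟨Or.inr hW, hV' W hW⟩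

end IsNoncrossingOn

/-- Noncrossing partitions with a marked block correspond to intervals together with a
noncrossing partition of the complement and an irreducible one of the interval. -/
theorem sum_noncrossingOn_sum_mem (S : Finset (Fin n)) {M : Type*} [AddCommMonoid M]
    (T : Finset (Finset (Fin n)) → Finset (Finset (Fin n)) → M) :
    ∑ P ∈ noncrossingOn S, ∑ V ∈ P,
        T (P \ subtreeOn StrictlyNests P V) (subtreeOn StrictlyNests P V) =
      ∑ J ∈ intervalsOf S, ∑ Q ∈ irreducibleOn J, ∑ P ∈ noncrossingOn (S \ J), T P Q := by
  simp only [Finset.sum_sigma']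
  refine Finset.sum_nbij (fun x => ⟨(subtreeOn StrictlyNests x.1 x.2).sup id,
    subtreeOn StrictlyNests x.1 x.2, x.1 \ subtreeOn StrictlyNests x.1 x.2⟩) ?_ ?_ ?_ ?_
  · rintro ⟨P, V⟩ h
    simp only [Finset.mem_sigma, mem_noncrossingOn, mem_irreducibleOn] at h ⊢
    obtain ⟨hP, hV⟩ := h
    have hsub := subtreeOn_subset StrictlyNests P V
    refine ⟨hP.subtree_sup_mem_intervalsOf hV, ⟨hP.of_subset hsub,
      V, mem_subtreeOn_strictlyNests.2 ⟨hV, NestedIn.refl V⟩,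
      fun W hW => (mem_subtreeOn_strictlyNests.1 hW).2⟩, ?_⟩
    rw [← hP.sup_sdiff hsub]
    exact hP.of_subset Finset.sdiff_subset
  · rintro ⟨P, V⟩ h ⟨P', V'⟩ h' heq
    simp only [Finset.coe_sigma, Set.mem_sigma_iff, Finset.mem_coe, mem_noncrossingOn] at h h'
    simp only [Sigma.mk.injEq, heq_eq_eq] at heq
    obtain ⟨-, h1, h2⟩ := heq
    have hPP : P = P' := by
      rw [← Finset.union_sdiff_of_subset (subtreeOn_subset StrictlyNests P V), h2, h1,
        Finset.union_sdiff_of_subset (subtreeOn_subset StrictlyNests P' V')]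
    subst hPP
    have hV : V ∈ subtreeOn StrictlyNests P V' := by
      rw [← h1]
      exact mem_subtreeOn_strictlyNests.2 ⟨h.2, NestedIn.refl V⟩
    have hV' : V' ∈ subtreeOn StrictlyNests P V := by
      rw [h1]
      exact mem_subtreeOn_strictlyNests.2 ⟨h'.2, NestedIn.refl V'⟩
    rw [h.1.eq_of_nestedIn h.2 h'.2 (mem_subtreeOn_strictlyNests.1 hV).2
      (mem_subtreeOn_strictlyNests.1 hV').2]
  · rintro ⟨J, Q, P⟩ h
    simp only [Finset.coe_sigma, Set.mem_sigma_iff, Finset.mem_coe, mem_noncrossingOn,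
      mem_irreducibleOn] at h
    obtain ⟨hJ, ⟨hQ, V, hV, hV'⟩, hP⟩ := h
    have hsub := IsNoncrossingOn.subtreeOn_union hJ hP hQ hV hV'
    refine ⟨⟨P ∪ Q, V⟩, ?_, ?_⟩
    · simp only [Finset.coe_sigma, Set.mem_sigma_iff, Finset.mem_coe, mem_noncrossingOn]
      exact ⟨IsNoncrossingOn.union hJ hP hQ, Finset.mem_union_right _ hV⟩
    · simp only [hsub, hQ.sup_eq, Finset.union_sdiff_cancel_right
        (IsNoncrossingOn.disjoint_parts hP hQ)]
  · intro _ _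
    rfl

/-- The generating polynomial of noncrossing partitions of `S`, weighted by a multiplicative
function of the blocks and by the forest of nestings. -/
noncomputable def momentPoly (Ψ : Finset (Finset (Fin n)) → ℂ[X]) (f : Finset (Fin n) → ℂ)
    (S : Finset (Fin n)) : ℂ[X] :=
  ∑ P ∈ noncrossingOn S, C (∏ V ∈ P, f V) * Ψ P

/-- The infinitesimal generator associated with `momentPoly`. -/
noncomputable def generator (Ψ : Finset (Finset (Fin n)) → ℂ[X]) (f : Finset (Fin n) → ℂ)
    (J : Finset (Fin n)) : ℂ :=
  ∑ Q ∈ irreducibleOn J, (∏ V ∈ Q, f V) * (derivative (Ψ Q)).eval 0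

theorem noncrossingOn_empty : noncrossingOn (∅ : Finset (Fin n)) = {∅} := by
  ext P
  rw [mem_noncrossingOn, Finset.mem_singleton]
  constructor
  · intro hP
    refine Finset.eq_empty_of_forall_notMem fun V hV => ?_
    obtain ⟨x, hx⟩ := hP.nonempty V hV
    exact absurd (hP.subset V hV hx) (Finset.notMem_empty x)
  · rintro rfl
    constructor <;> simp

variable {L : ℂ[X] →ₗ[ℂ] ℂ[X]} {Ψ : Finset (Finset (Fin n)) → ℂ[X]}

theorem momentPoly_empty (hΨ : ForestFamily StrictlyNests L Ψ) (f : Finset (Fin n) → ℂ) :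
    momentPoly Ψ f ∅ = 1 := by
  simp [momentPoly, noncrossingOn_empty, hΨ.empty]

theorem momentPoly_eval_zero (hΨ : ForestFamily StrictlyNests L Ψ) (f : Finset (Fin n) → ℂ)
    {S : Finset (Fin n)} (hS : S.Nonempty) : (momentPoly Ψ f S).eval 0 = 0 := by
  rw [momentPoly, eval_finsetSum]
  refine Finset.sum_eq_zero fun P hP => ?_
  obtain ⟨x, hx⟩ := hS
  obtain ⟨V, hV, -⟩ := (mem_noncrossingOn.1 hP).cover x hx
  rw [eval_mul, hΨ.eval_zero P ⟨V, hV⟩, mul_zero]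

theorem derivative_momentPoly (hΨ : ForestFamily StrictlyNests L Ψ) (f : Finset (Fin n) → ℂ)
    (S : Finset (Fin n)) : derivative (momentPoly Ψ f S) =
      ∑ J ∈ intervalsOf S, C (generator Ψ f J) * momentPoly Ψ f (S \ J) := by
  have h1 : derivative (momentPoly Ψ f S) = ∑ P ∈ noncrossingOn S, ∑ V ∈ P,
      (C ((∏ W ∈ subtreeOn StrictlyNests P V, f W) *
        (derivative (Ψ (subtreeOn StrictlyNests P V))).eval 0) *
        (C (∏ W ∈ P \ subtreeOn StrictlyNests P V, f W) *
          Ψ (P \ subtreeOn StrictlyNests P V))) := by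
    rw [momentPoly, derivative_sum]
    refine Finset.sum_congr rfl fun P hP => ?_
    rw [derivative_C_mul, hΨ.derivative_eq (mem_noncrossingOn.1 hP).isForestOn, Finset.mul_sum]
    refine Finset.sum_congr rfl fun V _ => ?_
    rw [← Finset.prod_sdiff (subtreeOn_subset StrictlyNests P V), C_mul, C_mul]
    ring
  rw [h1, sum_noncrossingOn_sum_mem S fun P Q =>
    C ((∏ W ∈ Q, f W) * (derivative (Ψ Q)).eval 0) * (C (∏ W ∈ P, f W) * Ψ P)]
  refine Finset.sum_congr rfl fun J _ => ?_
  rw [generator, momentPoly, map_sum, Finset.sum_mul_sum]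

theorem sum_intervalsOf_eq {S : Finset (Fin n)} (hS : S.Nonempty) {M : Type*}
    [AddCommMonoid M] (T : Finset (Fin n) → M) :
    ∑ J ∈ intervalsOf S, T J = T S + ∑ J ∈ (intervalsOf S).erase S, T J :=
  (Finset.add_sum_erase _ _ (mem_intervalsOf.2
    ⟨Finset.Subset.refl S, hS, fun _ _ _ _ _ hz _ _ => hz⟩)).symm

/-- Two weighted sums over noncrossing partitions which agree on all subsets have the same
infinitesimal generators. -/
theorem momentPoly_eq_and_generator_eq {L' : ℂ[X] →ₗ[ℂ] ℂ[X]}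
    {Ψ' : Finset (Finset (Fin n)) → ℂ[X]} (hΨ : ForestFamily StrictlyNests L Ψ)
    (hΨ' : ForestFamily StrictlyNests L' Ψ') (f f' : Finset (Fin n) → ℂ)
    (heq : ∀ S : Finset (Fin n), S.Nonempty →
      (momentPoly Ψ f S).eval 1 = (momentPoly Ψ' f' S).eval 1) (S : Finset (Fin n)) :
    momentPoly Ψ f S = momentPoly Ψ' f' S ∧
      (S.Nonempty → generator Ψ f S = generator Ψ' f' S) := by
  induction S using Finset.strongInduction with
  | _ S ih =>
  rcases S.eq_empty_or_nonempty with rfl | hS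
  · rw [momentPoly_empty hΨ, momentPoly_empty hΨ']
    simp
  have hder : derivative (momentPoly Ψ f S - momentPoly Ψ' f' S -
      C (generator Ψ f S - generator Ψ' f' S) * X) = 0 := by
    rw [derivative_sub, derivative_sub, derivative_momentPoly hΨ, derivative_momentPoly hΨ',
      sum_intervalsOf_eq hS, sum_intervalsOf_eq hS, Finset.sdiff_self, momentPoly_empty hΨ,
      momentPoly_empty hΨ', derivative_C_mul, derivative_X]
    have : ∀ J ∈ (intervalsOf S).erase S, C (generator Ψ f J) * momentPoly Ψ f (S \ J) =
        C (generator Ψ' f' J) * momentPoly Ψ' f' (S \ J) := by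
      intro J hJ
      rw [Finset.mem_erase, mem_intervalsOf] at hJ
      obtain ⟨hJS, hsub, hJne, -⟩ := hJ
      rw [(ih J (hsub.ssubset_of_ne hJS)).2 hJne,
        (ih (S \ J) (Finset.sdiff_ssubset hsub hJne)).1]
    rw [Finset.sum_congr rfl this, C_sub]
    ring
  have hconst := eq_C_of_natDegree_eq_zero (derivative_eq_zero.1 hder)
  set c := (momentPoly Ψ f S - momentPoly Ψ' f' S -
      C (generator Ψ f S - generator Ψ' f' S) * X).coeff 0
  have h0 := congrArg (eval 0) hconst
  have h1 := congrArg (eval 1) hconst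
  simp only [eval_sub, eval_mul, eval_C, eval_X, momentPoly_eval_zero hΨ f hS,
    momentPoly_eval_zero hΨ' f' hS, heq S hS] at h0 h1
  have hc : c = 0 := by simpa using h0.symm
  have hg : generator Ψ f S - generator Ψ' f' S = 0 := by
    rw [hc] at h1
    linear_combination -h1
  refine ⟨?_, fun _ => sub_eq_zero.1 hg⟩
  rw [hc, hg] at hconst
  simpa [sub_eq_zero] using hconst

end NoncrossingSums

section Transport

open Polynomial

variable {m n : ℕ}

/-- The image of a set of blocks under an order embedding of the ground set. -/
def mapBlocks (e : Fin m ↪o Fin n) (P : Finset (Finset (Fin m))) : Finset (Finset (Fin n)) :=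
  P.map (Finset.mapEmbedding e.toEmbedding).toEmbedding

theorem mem_mapBlocks {e : Fin m ↪o Fin n} {P : Finset (Finset (Fin m))}
    {W : Finset (Fin n)} : W ∈ mapBlocks e P ↔ ∃ V ∈ P, V.map e.toEmbedding = W := by
  simp [mapBlocks]

theorem map_mem_mapBlocks {e : Fin m ↪o Fin n} {P : Finset (Finset (Fin m))}
    {V : Finset (Fin m)} : V.map e.toEmbedding ∈ mapBlocks e P ↔ V ∈ P := by
  simp [mapBlocks]

theorem mapBlocks_refl (P : Finset (Finset (Fin n))) :
    mapBlocks (RelEmbedding.refl (· ≤ ·)) P = P := by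
  ext W
  rw [mem_mapBlocks]
  have : ∀ V : Finset (Fin n),
      V.map (RelEmbedding.refl (fun x y : Fin n => x ≤ y)).toEmbedding = V :=
    fun V => Finset.map_refl
  simp only [this, exists_eq_right]

theorem isNoncrossingOn_mapBlocks (e : Fin m ↪o Fin n) (π : NPart m)
    (hπ : IsNoncrossing π) :
    IsNoncrossingOn (Finset.univ.map e.toEmbedding) (mapBlocks e π.parts) where
  nonempty W hW := by
    obtain ⟨V, hV, rfl⟩ := mem_mapBlocks.1 hW
    exact (π.nonempty_of_mem_parts hV).map
  subset W hW := by
    obtain ⟨V, hV, rfl⟩ := mem_mapBlocks.1 hW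
    exact Finset.map_subset_map.2 (Finset.subset_univ V)
  cover x hx := by
    obtain ⟨y, -, rfl⟩ := Finset.mem_map.1 hx
    obtain ⟨V, hV, hy⟩ := π.exists_mem (Finset.mem_univ y)
    exact ⟨_, map_mem_mapBlocks.2 hV, Finset.mem_map_of_mem _ hy⟩
  disjoint W hW W' hW' x hx hx' := by
    obtain ⟨V, hV, rfl⟩ := mem_mapBlocks.1 hW
    obtain ⟨V', hV', rfl⟩ := mem_mapBlocks.1 hW'
    obtain ⟨y, hy, rfl⟩ := Finset.mem_map.1 hx
    rw [Finset.mem_map'] at hx'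
    rw [π.eq_of_mem_parts hV hV' hy hx']
  noncrossing a b c d hab hbc hcd W hW W' hW' ha hc hb hd := by
    obtain ⟨V, hV, rfl⟩ := mem_mapBlocks.1 hW
    obtain ⟨V', hV', rfl⟩ := mem_mapBlocks.1 hW'
    obtain ⟨a, ha', rfl⟩ := Finset.mem_map.1 ha
    obtain ⟨b, hb', rfl⟩ := Finset.mem_map.1 hb
    obtain ⟨c, hc', rfl⟩ := Finset.mem_map.1 hc
    obtain ⟨d, hd', rfl⟩ := Finset.mem_map.1 hd
    rw [hπ a b c d (e.lt_iff_lt.1 hab) (e.lt_iff_lt.1 hbc) (e.lt_iff_lt.1 hcd)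
      V hV V' hV' ha' hc' hb' hd']

theorem IsNoncrossingOn.exists_mapBlocks_eq {e : Fin m ↪o Fin n}
    {P : Finset (Finset (Fin n))}
    (hP : IsNoncrossingOn (Finset.univ.map e.toEmbedding) P) :
    ∃ π : NPart m, IsNoncrossing π ∧ mapBlocks e π.parts = P := by
  classical
  let B : Finset (Finset (Fin m)) :=
    Finset.univ.filter fun V : Finset (Fin m) => V.map e.toEmbedding ∈ P
  have hB : ∀ V : Finset (Fin m), V ∈ B ↔ V.map e.toEmbedding ∈ P := fun V => by simp [B]
  have hmap : ∀ W ∈ P, ∃ V : Finset (Fin m), V.map e.toEmbedding = W := fun W hW => by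
    obtain ⟨V, -, hV⟩ := Finset.subset_map_iff.1 (hP.subset W hW)
    exact ⟨V, hV.symm⟩
  refine ⟨Finpartition.ofExistsUnique B (fun _ _ => Finset.subset_univ _) (fun x _ => ?_)
    (fun h => ?_), ?_, ?_⟩
  · obtain ⟨W, hW, hxW⟩ := hP.cover (e x) (Finset.mem_map_of_mem _ (Finset.mem_univ x))
    obtain ⟨V, rfl⟩ := hmap W hW
    refine ⟨V, ⟨(hB V).2 hW, (Finset.mem_map' e.toEmbedding).1 hxW⟩, ?_⟩
    rintro U ⟨hU, hxU⟩
    exact Finset.map_injective e.toEmbedding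
      (hP.disjoint _ ((hB U).1 hU) _ hW (e x) (Finset.mem_map_of_mem _ hxU) hxW)
  · simpa using hP.nonempty _ ((hB ∅).1 h)
  · intro a b c d hab hbc hcd V hV W hW ha hc hb hd
    exact Finset.map_injective e.toEmbedding
      (hP.noncrossing (e a) (e b) (e c) (e d) (e.lt_iff_lt.2 hab) (e.lt_iff_lt.2 hbc)
        (e.lt_iff_lt.2 hcd) _ ((hB V).1 hV) _ ((hB W).1 hW) (Finset.mem_map_of_mem _ ha)
        (Finset.mem_map_of_mem _ hc) (Finset.mem_map_of_mem _ hb)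
        (Finset.mem_map_of_mem _ hd))
  · ext W
    change W ∈ mapBlocks e B ↔ W ∈ P
    rw [mem_mapBlocks]
    constructor
    · rintro ⟨V, hV, rfl⟩
      exact (hB V).1 hV
    · intro hW
      obtain ⟨V, rfl⟩ := hmap W hW
      exact ⟨V, (hB V).2 hW, rfl⟩

open Classical in
theorem finsum_isNoncrossing_mapBlocks (e : Fin m ↪o Fin n)
    (p : Finset (Finset (Fin n)) → Prop) {M : Type*} [AddCommMonoid M]
    (g : Finset (Finset (Fin n)) → M) :
    ∑ᶠ π ∈ {π : NPart m | IsNoncrossing π ∧ p (mapBlocks e π.parts)},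
        g (mapBlocks e π.parts) =
      ∑ P ∈ (noncrossingOn (Finset.univ.map e.toEmbedding)).filter p, g P := by
  have hset : {π : NPart m | IsNoncrossing π ∧ p (mapBlocks e π.parts)} =
      ((Finset.univ.filter fun π : NPart m => IsNoncrossing π ∧ p (mapBlocks e π.parts) :
        Finset (NPart m)) : Set (NPart m)) := by
    ext π
    simp
  rw [hset, finsum_mem_coe_finset]
  refine Finset.sum_nbij (fun π => mapBlocks e π.parts) ?_ ?_ ?_ fun _ _ => rfl
  · intro π hπ
    simp only [Finset.mem_filter, Finset.mem_univ, true_and, mem_noncrossingOn] at hπ ⊢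
    exact ⟨isNoncrossingOn_mapBlocks e π hπ.1, hπ.2⟩
  · intro π _ π' _ h
    exact Finpartition.ext (Finset.map_injective _ h)
  · intro P hP
    simp only [Finset.coe_filter, Set.mem_ofPred_eq, mem_noncrossingOn] at hP
    obtain ⟨π, hπ, rfl⟩ := hP.1.exists_mapBlocks_eq
    exact ⟨π, by simpa using ⟨hπ, hP.2⟩, rfl⟩

theorem finsum_isNoncrossing (e : Fin m ↪o Fin n) {M : Type*} [AddCommMonoid M]
    (g : Finset (Finset (Fin n)) → M) :
    ∑ᶠ π ∈ {π : NPart m | IsNoncrossing π}, g (mapBlocks e π.parts) =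
      ∑ P ∈ noncrossingOn (Finset.univ.map e.toEmbedding), g P := by
  simpa using finsum_isNoncrossing_mapBlocks e (fun _ => True) g

theorem nestedIn_map_iff (e : Fin m ↪o Fin n) {V W : Finset (Fin m)} :
    NestedIn (W.map e.toEmbedding) (V.map e.toEmbedding) ↔ NestedIn W V := by
  simp [NestedIn]

theorem subtreeOn_mapBlocks (e : Fin m ↪o Fin n) (P : Finset (Finset (Fin m)))
    (V : Finset (Fin m)) : subtreeOn StrictlyNests (mapBlocks e P) (V.map e.toEmbedding) =
      mapBlocks e (subtreeOn StrictlyNests P V) := by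
  ext W
  simp only [mem_subtreeOn_strictlyNests, mem_mapBlocks]
  constructor
  · rintro ⟨⟨U, hU, rfl⟩, h⟩
    exact ⟨U, ⟨hU, (nestedIn_map_iff e).1 h⟩, rfl⟩
  · rintro ⟨U, ⟨hU, h⟩, rfl⟩
    exact ⟨⟨U, hU, rfl⟩, (nestedIn_map_iff e).2 h⟩

theorem prod_mapBlocks {M : Type*} [CommMonoid M] (e : Fin m ↪o Fin n)
    (P : Finset (Finset (Fin m))) (f : Finset (Fin n) → M) :
    ∏ W ∈ mapBlocks e P, f W = ∏ V ∈ P, f (V.map e.toEmbedding) := by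
  simp [mapBlocks]

theorem factorialOn_mapBlocks (e : Fin m ↪o Fin n) (π : NPart m) :
    factorialOn StrictlyNests (mapBlocks e π.parts) = forestFactorial π := by
  rw [factorialOn, prod_mapBlocks, forestFactorial]
  refine Finset.prod_congr rfl fun V _ => ?_
  rw [subtreeOn_mapBlocks, mapBlocks, Finset.card_map]
  congr 1
  ext W
  simp [mem_subtreeOn_strictlyNests]

theorem sort_map_comp {A : Type*} (e : Fin m ↪o Fin n) (a : Fin n → A)
    (V : Finset (Fin m)) :
    ((V.map e.toEmbedding).sort (· ≤ ·)).map a = (V.sort (· ≤ ·)).map (a ∘ e) := by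
  rw [← List.map_map]
  congr 1
  exact (Finset.map_sort _ _ _ _ fun x _ y _ => e.le_iff_le.symm).symm

theorem blockApply_eq_prod_mapBlocks {A : Type*} (f : List A → ℂ) (e : Fin m ↪o Fin n)
    (a : Fin n → A) (π : NPart m) : blockApply f (a ∘ e) π =
      ∏ V ∈ mapBlocks e π.parts, f ((V.sort (· ≤ ·)).map a) := by
  rw [blockApply, prod_mapBlocks]
  exact Finset.prod_congr rfl fun V _ => by rw [sort_map_comp]

theorem ofFn_comp_orderEmbOfFin {A : Type*} (a : Fin n → A) (S : Finset (Fin n)) :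
    List.ofFn (a ∘ S.orderEmbOfFin rfl) = (S.sort (· ≤ ·)).map a := by
  rw [← List.map_ofFn, ← Finset.listMap_orderEmbOfFin_finRange S rfl, List.ofFn_eq_map]

theorem MonotoneMC.eval_momentPoly {A : Type*} [Ring A] {φ : A → ℂ} {h : List A → ℂ}
    (hφ : MonotoneMC φ h) (a : Fin n → A) {S : Finset (Fin n)} (hS : S.Nonempty) :
    (momentPoly (volumePoly StrictlyNests) (fun V => h ((V.sort (· ≤ ·)).map a)) S).eval 1 =
      φ ((S.sort (· ≤ ·)).map a).prod := by
  rw [← ofFn_comp_orderEmbOfFin, hφ S.card hS.card_pos]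
  have key := finsum_isNoncrossing (S.orderEmbOfFin rfl) fun P =>
    (factorialOn StrictlyNests P : ℂ)⁻¹ * ∏ V ∈ P, h ((V.sort (· ≤ ·)).map a)
  simp only [factorialOn_mapBlocks, ← blockApply_eq_prod_mapBlocks,
    Finset.map_orderEmbOfFin_univ S rfl] at key
  rw [key, momentPoly, eval_finsetSum]
  refine Finset.sum_congr rfl fun P _ => ?_
  rw [eval_mul, eval_C, volumePoly, eval_mul, eval_C, eval_pow, eval_X, one_pow, mul_one, mul_comm]

theorem FreeMC.eval_momentPoly {A : Type*} [Ring A] {φ : A → ℂ} {r : List A → ℂ}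
    (hφ : FreeMC φ r) (a : Fin n → A) {S : Finset (Fin n)} (hS : S.Nonempty) :
    (momentPoly (weakOrderPoly StrictlyNests) (fun V => r ((V.sort (· ≤ ·)).map a)) S).eval 1 =
      φ ((S.sort (· ≤ ·)).map a).prod := by
  rw [← ofFn_comp_orderEmbOfFin, hφ S.card hS.card_pos]
  have key := finsum_isNoncrossing (S.orderEmbOfFin rfl) fun P =>
    ∏ V ∈ P, r ((V.sort (· ≤ ·)).map a)
  simp only [← blockApply_eq_prod_mapBlocks, Finset.map_orderEmbOfFin_univ S rfl] at key
  rw [key, momentPoly, eval_finsetSum]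
  refine Finset.sum_congr rfl fun P hP => ?_
  rw [eval_mul, eval_C, weakOrderPoly_eval_one (mem_noncrossingOn.1 hP).isForestOn, mul_one]

theorem singleton_mem_irreducibleOn {S : Finset (Fin n)} (hS : S.Nonempty) :
    {S} ∈ irreducibleOn S := by
  rw [mem_irreducibleOn]
  refine ⟨⟨?_, ?_, ?_, ?_, ?_⟩, S, Finset.mem_singleton_self S, ?_⟩
  · simpa using hS
  · simp
  · simp
  · simp
  · rintro - - - - - - - V hV W hW - - - -
    rw [Finset.mem_singleton.1 hV, Finset.mem_singleton.1 hW]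
  · simpa using NestedIn.refl S

theorem factorialOn_singleton (S : Finset (Fin n)) :
    factorialOn StrictlyNests {S} = 1 := by
  have : subtreeOn StrictlyNests {S} S = {S} := by
    ext W
    rw [mem_subtreeOn_strictlyNests, Finset.mem_singleton, and_iff_left_iff_imp]
    rintro rfl
    exact NestedIn.refl _
  rw [factorialOn, Finset.prod_singleton, this, Finset.card_singleton]

theorem generator_volumePoly (f : Finset (Fin n) → ℂ) {S : Finset (Fin n)}
    (hS : S.Nonempty) : generator (volumePoly StrictlyNests) f S = f S := by
  rw [generator, Finset.sum_eq_single_of_mem {S} (singleton_mem_irreducibleOn hS)]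
  · simp [derivative_volumePoly_eval_zero, factorialOn_singleton]
  · intro Q hQ hne
    rw [derivative_volumePoly_eval_zero, if_neg, mul_zero]
    intro hcard
    obtain ⟨V, rfl⟩ := Finset.card_eq_one.1 hcard
    have := (mem_irreducibleOn.1 hQ).1.sup_eq
    rw [Finset.sup_singleton] at this
    exact hne (by rw [← this, id])

theorem hasOuterBlock_iff {π : NPart n} (hn : 1 ≤ n) :
    HasOuterBlock π.parts ↔ IsIrreducibleNC π := by
  constructor
  · rintro ⟨V, hV, hout⟩
    refine ⟨V, hV, fun i hi => ?_, fun i hi => ?_⟩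
    · obtain ⟨W, hW, hiW⟩ := π.exists_mem (Finset.mem_univ i)
      obtain ⟨⟨a, ha, hai⟩, -⟩ := hout W hW i hiW
      rwa [← le_antisymm hai (Fin.le_def.2 (by omega))]
    · obtain ⟨W, hW, hiW⟩ := π.exists_mem (Finset.mem_univ i)
      obtain ⟨-, ⟨b, hb, hib⟩⟩ := hout W hW i hiW
      rwa [le_antisymm hib (Fin.le_def.2 (by omega))]
  · rintro ⟨V, hV, h0, h1⟩
    exact ⟨V, hV, fun W _ w _ => ⟨⟨⟨0, hn⟩, h0 _ rfl, Fin.le_def.2 (Nat.zero_le _)⟩,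
      ⟨⟨n - 1, by omega⟩, h1 _ rfl, Fin.le_def.2 (by simp only; omega)⟩⟩⟩

theorem surjCount_parts (π : NPart n) (k : ℕ) :
    surjCount StrictlyNests π.parts k = omegaNestK π k := by
  refine Nat.card_congr (Equiv.subtypeEquivRight fun f => and_congr_right fun _ => ?_)
  simp only [StrictlyNests, and_imp, ne_eq, Subtype.ext_iff]

theorem generator_weakOrderPoly_univ (f : Finset (Fin n) → ℂ) (hn : 1 ≤ n) :
    generator (weakOrderPoly StrictlyNests) f Finset.univ =
      ∑ᶠ π ∈ {π : NPart n | IsNoncrossing π ∧ IsIrreducibleNC π},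
        (-1 : ℂ) ^ (π.parts.card - 1) * omegaNest π * ∏ V ∈ π.parts, f V := by
  have key := finsum_isNoncrossing_mapBlocks (RelEmbedding.refl (· ≤ ·) : Fin n ↪o Fin n)
    HasOuterBlock fun Q =>
      (∏ V ∈ Q, f V) * (derivative (weakOrderPoly StrictlyNests Q)).eval 0
  have huniv : Finset.univ.map
      (RelEmbedding.refl (fun x y : Fin n => x ≤ y)).toEmbedding = Finset.univ :=
    Finset.map_refl
  simp only [mapBlocks_refl, hasOuterBlock_iff hn, huniv] at key
  rw [generator, irreducibleOn, ← key]
  refine finsum_mem_congr rfl fun π _ => ?_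
  have hne : π.parts.Nonempty := by
    obtain ⟨V, hV, -⟩ := π.exists_mem (Finset.mem_univ ⟨0, hn⟩)
    exact ⟨V, hV⟩
  rw [derivative_weakOrderPoly_eval_zero StrictlyNests hne, mul_comm]
  simp only [surjCount_parts, omegaNest]

end Transport

/-- Monotone cumulants in terms of free cumulants:
`h_n(a_1,…,a_n) = Σ_{π ∈ NC_irr(n)} (−1)^{|π|−1} ω(t(π)) r_π(a_1,…,a_n)`. -/
theorem monotone_cumulants_eq_sum_free_cumulants
    (A : Type*) [Ring A] [Algebra ℂ A] (φ : A →ₗ[ℂ] ℂ) (hφ : φ 1 = 1)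
    (h : List A → ℂ) (hmch : MonotoneMC (fun x => φ x) h)
    (r : List A → ℂ) (hmcr : FreeMC (fun x => φ x) r)
    (n : ℕ) (hn : 1 ≤ n) (a : Fin n → A) :
    h (List.ofFn a) =
      ∑ᶠ π ∈ {π : NPart n | IsNoncrossing π ∧ IsIrreducibleNC π},
        (-1 : ℂ) ^ (π.parts.card - 1) * omegaNest π * blockApply r a π := by
  have huniv : (Finset.univ : Finset (Fin n)).Nonempty := ⟨⟨0, hn⟩, Finset.mem_univ _⟩
  have key := (momentPoly_eq_and_generator_eq (forestFamily_volumePoly StrictlyNests)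
    (forestFamily_weakOrderPoly StrictlyNests) (fun V => h ((V.sort (· ≤ ·)).map a))
    (fun V => r ((V.sort (· ≤ ·)).map a))
    (fun S hS => (hmch.eval_momentPoly a hS).trans (hmcr.eval_momentPoly a hS).symm)
    Finset.univ).2 huniv
  rw [generator_volumePoly _ huniv, generator_weakOrderPoly_univ _ hn] at key
  simpa only [blockApply, Fin.sort_univ, ← List.ofFn_eq_map] using key
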